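/- Let α > 2. Every singularity of the N-body problem is a collision singularity: if a solution x(t) has a singularity at σ < ∞, then x(t) converges as t → σ⁻ to a definite point of the collision set Δ. Equivalently, for α > 2 no solution can have I(x(t)) → ∞ as t → σ⁻ at a finite singularity time σ. -/

import Mathlib

/- STATEMENT 2: for α > 2 every singularity of the N-body problem is a collision
singularity: at a finite singular time σ the solution converges to a point of the
collision set Δ. -/

namespace NBodyPaper

open Real Filter

noncomputable section

abbrev E3 := EuclideanSpace ℝ (Fin 3)

variable {N : ℕ}

/-- The α-homogeneous potential `U(x) = -∑_{i<j} m_i m_j / |x_i - x_j|^α`. -/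
def pot (α : ℝ) (m : Fin N → ℝ) (q : Fin N → E3) : ℝ :=
  -∑ i : Fin N, ∑ j ∈ Finset.univ.filter (fun j => i < j), m i * m j / ‖q i - q j‖ ^ α

def kinetic (m : Fin N → ℝ) (v : Fin N → E3) : ℝ := (1 / 2) * ∑ i, m i * ‖v i‖ ^ 2

/-- Total energy `E(x, ẋ)`. -/
def energy (α : ℝ) (m : Fin N → ℝ) (q v : Fin N → E3) : ℝ := kinetic m v + pot α m q

/-- Moment of inertia `I(x) = ∑ m_i |x_i|²`. -/
def inertia (m : Fin N → ℝ) (q : Fin N → E3) : ℝ := ∑ i, m i * ‖q i‖ ^ 2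

/-- `ẍ_i = -∇_i U / m_i = -α ∑_{j≠i} m_j (x_i - x_j)/|x_i - x_j|^{α+2}`. -/
def accel (α : ℝ) (m : Fin N → ℝ) (q : Fin N → E3) (i : Fin N) : E3 :=
  (-α) • ∑ j ∈ Finset.univ.erase i, (m j / ‖q i - q j‖ ^ (α + 2)) • (q i - q j)

/-- Collision-free configuration. -/
def OffDiag (q : Fin N → E3) : Prop := ∀ i j, i ≠ j → q i ≠ q j

/-- The time interval `[0, σ)` for `σ ∈ (0, ∞]`. -/
def Dom (σ : EReal) : Set ℝ := {t : ℝ | 0 ≤ t ∧ (t : EReal) < σ}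

/-- `x` (with velocity `v`) solves the N-body equations on the set `s`. -/
def IsSolnOn (α : ℝ) (m : Fin N → ℝ) (x v : ℝ → Fin N → E3) (s : Set ℝ) : Prop :=
  ∀ t ∈ s, OffDiag (x t) ∧
    ∀ i, HasDerivAt (fun τ => x τ i) (v t i) t ∧ HasDerivAt (fun τ => v τ i) (accel α m (x t) i) t

/-- `x` is a solution on its maximal interval of existence `[0, σ)`:
it solves the equations there and no solution extends it to a longer interval. -/
def IsMaxSoln (α : ℝ) (m : Fin N → ℝ) (σ : EReal) (x v : ℝ → Fin N → E3) : Prop :=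
  0 < σ ∧ IsSolnOn α m x v (Dom σ) ∧
    ∀ (σ' : EReal) (x' v' : ℝ → Fin N → E3), IsSolnOn α m x' v' (Dom σ') →
      (∀ t ∈ Dom σ, x' t = x t ∧ v' t = v t) → σ' ≤ σ

theorem accel_eq_sum_univ (α : ℝ) (m : Fin N → ℝ) (q : Fin N → E3) (i : Fin N) :
    accel α m q i = (-α) • ∑ j, (m j / ‖q i - q j‖ ^ (α + 2)) • (q i - q j) := by
  rw [accel, ← Finset.add_sum_erase Finset.univ _ (Finset.mem_univ i)]
  simp

/-- The accelerations, tested against a displacement field and weighted by the masses. -/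
theorem sum_mass_mul_inner_accel (α : ℝ) (m : Fin N → ℝ) (q w : Fin N → E3) :
    ∑ i, m i * inner ℝ (w i) (accel α m q i) =
      -(α / 2) * ∑ i, ∑ j, m i * m j / ‖q i - q j‖ ^ (α + 2) *
        inner ℝ (q i - q j) (w i - w j) := by
  have h1 : ∑ i, m i * inner ℝ (w i) (accel α m q i) =
      -α * ∑ i, ∑ j, m i * m j / ‖q i - q j‖ ^ (α + 2) * inner ℝ (q i - q j) (w i) := by
    rw [Finset.mul_sum]
    refine Finset.sum_congr rfl fun i _ => ?_
    rw [accel_eq_sum_univ, inner_smul_right, inner_sum, Finset.mul_sum, Finset.mul_sum,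
      Finset.mul_sum]
    refine Finset.sum_congr rfl fun j _ => ?_
    rw [inner_smul_right, real_inner_comm]
    ring
  have h2 : ∑ i, ∑ j, m i * m j / ‖q i - q j‖ ^ (α + 2) * inner ℝ (q i - q j) (w i) =
      -∑ i, ∑ j, m i * m j / ‖q i - q j‖ ^ (α + 2) * inner ℝ (q i - q j) (w j) := by
    rw [Finset.sum_comm, ← Finset.sum_neg_distrib]
    refine Finset.sum_congr rfl fun i _ => ?_
    rw [← Finset.sum_neg_distrib]
    refine Finset.sum_congr rfl fun j _ => ?_
    rw [← neg_sub (q i) (q j), inner_neg_left, norm_neg]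
    ring
  have h3 : ∑ i, ∑ j, m i * m j / ‖q i - q j‖ ^ (α + 2) * inner ℝ (q i - q j) (w i - w j) =
      ∑ i, ∑ j, m i * m j / ‖q i - q j‖ ^ (α + 2) * inner ℝ (q i - q j) (w i) -
      ∑ i, ∑ j, m i * m j / ‖q i - q j‖ ^ (α + 2) * inner ℝ (q i - q j) (w j) := by
    simp only [inner_sub_right, mul_sub, Finset.sum_sub_distrib]
  rw [h1, h3]
  linear_combination (-α / 2) * h2

theorem sum_sum_filter_lt {f : Fin N → Fin N → ℝ} (hsymm : ∀ i j, f i j = f j i)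
    (hdiag : ∀ i, f i i = 0) :
    ∑ i, ∑ j ∈ Finset.univ.filter (fun j => i < j), f i j = (1 / 2) * ∑ i, ∑ j, f i j := by
  have h : ∑ i, ∑ j, f i j = ∑ i, ∑ j ∈ Finset.univ.filter (fun j => i < j), f i j +
      ∑ i, ∑ j ∈ Finset.univ.filter (fun j => j < i), f i j := by
    simp only [Finset.sum_filter, ← Finset.sum_add_distrib]
    refine Finset.sum_congr rfl fun i _ => Finset.sum_congr rfl fun j _ => ?_
    rcases lt_trichotomy i j with h | h | h
    · simp [h, h.not_gt]
    · subst h; simp [hdiag]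
    · simp [h, h.not_gt]
  have h' : ∑ i, ∑ j ∈ Finset.univ.filter (fun j => j < i), f i j =
      ∑ i, ∑ j ∈ Finset.univ.filter (fun j => i < j), f i j := by
    simp only [Finset.sum_filter]
    rw [Finset.sum_comm]
    refine Finset.sum_congr rfl fun i _ => Finset.sum_congr rfl fun j _ => ?_
    rw [hsymm]
  rw [h, h']
  ring

theorem pot_eq_sum_univ {α : ℝ} (hα : 0 < α) (m : Fin N → ℝ) (q : Fin N → E3) :
    pot α m q = -((1 / 2) * ∑ i, ∑ j, m i * m j / ‖q i - q j‖ ^ α) := by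
  rw [pot, sum_sum_filter_lt]
  · intro i j
    rw [norm_sub_rev, mul_comm (m i)]
  · intro i
    simp [Real.zero_rpow hα.ne']

/-- Euler's identity for the homogeneous potential. -/
theorem sum_mass_mul_inner_self_accel {α : ℝ} (hα : 0 < α) (m : Fin N → ℝ) (q : Fin N → E3) :
    ∑ i, m i * inner ℝ (q i) (accel α m q i) = α * pot α m q := by
  rw [sum_mass_mul_inner_accel, pot_eq_sum_univ hα]
  have : ∀ i j, m i * m j / ‖q i - q j‖ ^ (α + 2) * inner ℝ (q i - q j) (q i - q j) =
      m i * m j / ‖q i - q j‖ ^ α := by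
    intro i j
    rcases eq_or_ne (q i - q j) 0 with h | h
    · simp [h, Real.zero_rpow hα.ne']
    · have h0 : 0 < ‖q i - q j‖ := norm_pos_iff.2 h
      rw [real_inner_self_eq_norm_sq, Real.rpow_add h0, Real.rpow_two]
      field_simp
  simp only [this]
  ring

theorem pot_nonpos {α : ℝ} {m : Fin N → ℝ} (hm : ∀ i, 0 < m i) (q : Fin N → E3) :
    pot α m q ≤ 0 := by
  rw [pot, neg_nonpos]
  exact Finset.sum_nonneg fun i _ => Finset.sum_nonneg fun j _ =>
    div_nonneg (mul_pos (hm i) (hm j)).le (Real.rpow_nonneg (norm_nonneg _) _)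

theorem hasDerivAt_div_norm_rpow {α c t : ℝ} {r : ℝ → E3} {r' : E3} (hr : HasDerivAt r r' t)
    (h0 : r t ≠ 0) :
    HasDerivAt (fun τ => c / ‖r τ‖ ^ α) (-α * (c / ‖r t‖ ^ (α + 2) * inner ℝ (r t) r')) t := by
  have hpos : 0 < ‖r t‖ := norm_pos_iff.2 h0
  have h := (hr.norm_sq.rpow_const (p := -(α / 2)) (Or.inl (by positivity))).const_mul c
  have key : ∀ s : ℝ, 0 ≤ s → c / s ^ α = c * (s ^ 2) ^ (-(α / 2)) := by
    intro s hs
    rw [← Real.rpow_two, ← Real.rpow_mul hs, div_eq_mul_inv, ← Real.rpow_neg hs]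
    congr 2; ring
  have e : (fun τ => c / ‖r τ‖ ^ α) = fun τ => c * (‖r τ‖ ^ 2) ^ (-(α / 2)) :=
    funext fun τ => key _ (norm_nonneg _)
  rw [e]
  refine h.congr_deriv ?_
  have : (‖r t‖ ^ 2) ^ (-(α / 2) - 1) = (‖r t‖ ^ (α + 2))⁻¹ := by
    rw [← Real.rpow_two, ← Real.rpow_mul hpos.le, ← Real.rpow_neg hpos.le]
    congr 1; ring
  rw [this]
  ring

theorem hasDerivAt_pot {α t : ℝ} (hα : 0 < α) (m : Fin N → ℝ) {x : ℝ → Fin N → E3}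
    {w : Fin N → E3} (hoff : OffDiag (x t)) (hx : ∀ i, HasDerivAt (fun τ => x τ i) (w i) t) :
    HasDerivAt (fun τ => pot α m (x τ)) (-∑ i, m i * inner ℝ (w i) (accel α m (x t) i)) t := by
  have hterm : ∀ i j, HasDerivAt (fun τ => m i * m j / ‖x τ i - x τ j‖ ^ α)
      (-α * (m i * m j / ‖x t i - x t j‖ ^ (α + 2) * inner ℝ (x t i - x t j) (w i - w j))) t := by
    intro i j
    rcases eq_or_ne i j with rfl | hij
    · simpa using hasDerivAt_const t _
    · exact hasDerivAt_div_norm_rpow ((hx i).sub (hx j)) (sub_ne_zero.2 (hoff i j hij))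
  have h := ((HasDerivAt.fun_sum (u := Finset.univ) fun i _ =>
    HasDerivAt.fun_sum (u := Finset.univ) fun j _ => hterm i j).const_mul (1 / 2)).neg
  simp only [pot_eq_sum_univ hα]
  refine h.congr_deriv ?_
  rw [sum_mass_mul_inner_accel]
  simp only [← Finset.mul_sum]
  ring

theorem IsSolnOn.hasDerivAt_energy {α : ℝ} (hα : 0 < α) {m : Fin N → ℝ}
    {x v : ℝ → Fin N → E3} {s : Set ℝ} (hsol : IsSolnOn α m x v s) {t : ℝ} (ht : t ∈ s) :
    HasDerivAt (fun τ => energy α m (x τ) (v τ)) 0 t := by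
  have hpot := hasDerivAt_pot hα m (hsol t ht).1 fun i => ((hsol t ht).2 i).1
  have hkin := (HasDerivAt.fun_sum (u := Finset.univ) fun i _ =>
    (((hsol t ht).2 i).2.norm_sq.const_mul (m i))).const_mul (1 / 2)
  refine (hkin.add hpot).congr_deriv ?_
  rw [← sub_eq_add_neg, sub_eq_zero, Finset.mul_sum]
  refine Finset.sum_congr rfl fun i _ => ?_
  ring

theorem IsSolnOn.hasDerivAt_inertia {α : ℝ} {m : Fin N → ℝ} {x v : ℝ → Fin N → E3} {s : Set ℝ}
    (hsol : IsSolnOn α m x v s) (a : Fin N → E3) {t : ℝ} (ht : t ∈ s) :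
    HasDerivAt (fun τ => inertia m (x τ - a))
      (2 * ∑ i, m i * inner ℝ (x t i - a i) (v t i)) t := by
  have h := HasDerivAt.fun_sum (u := Finset.univ) fun i _ =>
    ((((hsol t ht).2 i).1.sub_const (a i)).norm_sq.const_mul (m i))
  refine h.congr_deriv ?_
  rw [Finset.mul_sum]
  exact Finset.sum_congr rfl fun i _ => by ring

/-- The Lagrange–Jacobi identity for the moment of inertia about an arbitrary configuration. -/
theorem IsSolnOn.hasDerivAt_deriv_inertia {α : ℝ} (hα : 0 < α) {m : Fin N → ℝ}
    {x v : ℝ → Fin N → E3} {s : Set ℝ} (hsol : IsSolnOn α m x v s) (a : Fin N → E3) {t : ℝ}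
    (ht : t ∈ s) :
    HasDerivAt (fun τ => 2 * ∑ i, m i * inner ℝ (x τ i - a i) (v τ i))
      (4 * energy α m (x t) (v t) + (2 * α - 4) * pot α m (x t) -
        2 * ∑ i, m i * inner ℝ (a i) (accel α m (x t) i)) t := by
  have h := (HasDerivAt.fun_sum (u := Finset.univ) fun i _ =>
    (((((hsol t ht).2 i).1.sub_const (a i)).inner ℝ ((hsol t ht).2 i).2).const_mul
      (m i))).const_mul 2
  refine h.congr_deriv ?_
  have e := sum_mass_mul_inner_self_accel hα m (x t)
  simp only [inner_sub_left, mul_add, mul_sub, Finset.sum_add_distrib, Finset.sum_sub_distrib,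
    real_inner_self_eq_norm_sq, energy, kinetic] at *
  linear_combination 2 * e

/-- Near a configuration `q`, the forces tested against `q` stay bounded. -/
theorem continuousAt_sum_mass_mul_inner_accel (α : ℝ) (m : Fin N → ℝ) (q : Fin N → E3) :
    ContinuousAt (fun y => ∑ i, m i * inner ℝ (q i) (accel α m y i)) q := by
  simp only [sum_mass_mul_inner_accel]
  refine continuousAt_const.mul (tendsto_finsetSum _ fun i _ => tendsto_finsetSum _ fun j _ => ?_)
  rcases eq_or_ne (q i - q j) 0 with h | h
  · simp [h]
  · have hc : ContinuousAt (fun y : Fin N → E3 => y i - y j) q := by fun_prop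
    have hn : ‖q i - q j‖ ≠ 0 := norm_ne_zero_iff.2 h
    have hr : ContinuousAt (fun y : Fin N → E3 => ‖y i - y j‖ ^ (α + 2)) q :=
      hc.norm.rpow_const (Or.inl hn)
    exact (continuousAt_const.div hr
      (Real.rpow_pos_of_pos (norm_pos_iff.2 h) _).ne').mul
        (Filter.Tendsto.inner hc tendsto_const_nhds)

theorem inertia_nonneg {m : Fin N → ℝ} (hm : ∀ i, 0 < m i) (q : Fin N → E3) :
    0 ≤ inertia m q :=
  Finset.sum_nonneg fun i _ => mul_nonneg (hm i).le (sq_nonneg _)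

theorem norm_le_sqrt_inertia {m : Fin N → ℝ} (hm : ∀ i, 0 < m i) (q : Fin N → E3) :
    ‖q‖ ≤ √((∑ i, (m i)⁻¹) * inertia m q) := by
  refine (pi_norm_le_iff_of_nonneg (Real.sqrt_nonneg _)).2 fun i => Real.le_sqrt_of_sq_le ?_
  have h1 : m i * ‖q i‖ ^ 2 ≤ inertia m q :=
    Finset.single_le_sum (f := fun i => m i * ‖q i‖ ^ 2)
      (fun j _ => mul_nonneg (hm j).le (sq_nonneg _)) (Finset.mem_univ i)
  have h2 : (m i)⁻¹ ≤ ∑ i, (m i)⁻¹ :=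
    Finset.single_le_sum (f := fun i => (m i)⁻¹) (fun j _ => (inv_pos.2 (hm j)).le)
      (Finset.mem_univ i)
  calc ‖q i‖ ^ 2 = (m i)⁻¹ * (m i * ‖q i‖ ^ 2) := by
        rw [inv_mul_cancel_left₀ (hm i).ne']
    _ ≤ _ := mul_le_mul h2 h1 (mul_nonneg (hm i).le (sq_nonneg _))
        ((inv_pos.2 (hm i)).le.trans h2)

theorem continuous_inertia_sub (m : Fin N → ℝ) (q : Fin N → E3) :
    Continuous fun y => inertia m (y - q) := by
  unfold inertia
  fun_prop

/-- A function with second derivative bounded above stays bounded above in finite time. -/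
theorem exists_le_of_deriv2_le {f f' f'' : ℝ → ℝ} {σ C : ℝ} (hσ : 0 < σ)
    (hf : ∀ t ∈ Set.Ico 0 σ, HasDerivAt f (f' t) t)
    (hf' : ∀ t ∈ Set.Ico 0 σ, HasDerivAt f' (f'' t) t)
    (hC : ∀ t ∈ Set.Ico 0 σ, f'' t ≤ C) : ∃ M, ∀ t ∈ Set.Ico 0 σ, f t ≤ M := by
  have h1 : ∀ t ∈ Set.Ico 0 σ, f' t ≤ f' 0 + C * t := by
    intro t ht
    have hsub : ∀ s ∈ Set.Icc 0 t, s ∈ Set.Ico 0 σ := fun s hs => ⟨hs.1, hs.2.trans_lt ht.2⟩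
    refine image_le_of_deriv_right_le_deriv_boundary (a := 0) (b := t) (f' := f'')
      (B := fun s => f' 0 + C * s) (B' := fun _ => C)
      (fun s hs => (hf' s (hsub s hs)).continuousAt.continuousWithinAt)
      (fun s hs => (hf' s (hsub s (Set.Ico_subset_Icc_self hs))).hasDerivWithinAt)
      (by simp) (by fun_prop) (fun s _ => ?_)
      (fun s hs => hC s (hsub s (Set.Ico_subset_Icc_self hs))) ⟨ht.1, le_rfl⟩
    simpa using (((hasDerivAt_id s).const_mul C).const_add (f' 0)).hasDerivWithinAt
  have h2 : ∀ t ∈ Set.Ico 0 σ, f t ≤ f 0 + (|f' 0| + |C| * σ) * t := by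
    intro t ht
    have hsub : ∀ s ∈ Set.Icc 0 t, s ∈ Set.Ico 0 σ := fun s hs => ⟨hs.1, hs.2.trans_lt ht.2⟩
    refine image_le_of_deriv_right_le_deriv_boundary (a := 0) (b := t) (f' := f')
      (B := fun s => f 0 + (|f' 0| + |C| * σ) * s) (B' := fun _ => |f' 0| + |C| * σ)
      (fun s hs => (hf s (hsub s hs)).continuousAt.continuousWithinAt)
      (fun s hs => (hf s (hsub s (Set.Ico_subset_Icc_self hs))).hasDerivWithinAt)
      (by simp) (by fun_prop) (fun s _ => ?_) (fun s hs => ?_) ⟨ht.1, le_rfl⟩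
    · simpa using
        (((hasDerivAt_id s).const_mul (|f' 0| + |C| * σ)).const_add (f 0)).hasDerivWithinAt
    · have hs' := hsub s (Set.Ico_subset_Icc_self hs)
      refine (h1 s hs').trans (add_le_add (le_abs_self _) ?_)
      exact mul_le_mul (le_abs_self C) hs'.2.le hs'.1 (abs_nonneg C)
  refine ⟨f 0 + (|f' 0| + |C| * σ) * σ, fun t ht => (h2 t ht).trans ?_⟩
  have : (0 : ℝ) ≤ |f' 0| + |C| * σ := by positivity
  have := mul_le_mul_of_nonneg_left ht.2.le this
  linarith

/-- A semiconcave function lies above its endpoint bound up to a quadratic error. -/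
theorem le_add_of_deriv2_le {f f' f'' : ℝ → ℝ} {a b C ε t : ℝ}
    (hf : ∀ s ∈ Set.Icc a b, HasDerivAt f (f' s) s)
    (hf' : ∀ s ∈ Set.Icc a b, HasDerivAt f' (f'' s) s)
    (hC : ∀ s ∈ Set.Ioo a b, f'' s ≤ C) (ha : ε ≤ f a) (hb : ε ≤ f b)
    (ht : t ∈ Set.Icc a b) : ε ≤ f t + C / 2 * ((t - a) * (b - t)) := by
  have hg : ∀ s ∈ Set.Icc a b, HasDerivAt (fun s => f s + C / 2 * ((s - a) * (b - s)))
      (f' s + C / 2 * (a + b - 2 * s)) s := by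
    intro s hs
    refine ((hf s hs).add ((((hasDerivAt_id s).sub_const a).mul
      ((hasDerivAt_id s).const_sub b)).const_mul (C / 2))).congr_deriv ?_
    simp only [id]
    ring
  have hg' : ∀ s ∈ Set.Icc a b, HasDerivAt (fun s => f' s + C / 2 * (a + b - 2 * s))
      (f'' s - C) s := by
    intro s hs
    refine ((hf' s hs).add ((((hasDerivAt_id s).const_mul 2).const_sub (a + b)).const_mul
      (C / 2))).congr_deriv ?_
    ring
  have hconc : ConcaveOn ℝ (Set.Icc a b) fun s => f s + C / 2 * ((s - a) * (b - s)) := by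
    refine concaveOn_of_hasDerivWithinAt2_nonpos (convex_Icc a b)
      (fun s hs => (hg s hs).continuousAt.continuousWithinAt)
      (fun s hs => (hg s (interior_subset hs)).hasDerivWithinAt)
      (fun s hs => (hg' s (interior_subset hs)).hasDerivWithinAt) fun s hs => ?_
    rw [interior_Icc] at hs
    linarith [hC s hs]
  have hab : a ≤ b := ht.1.trans ht.2
  have hmin := hconc.min_le_of_mem_Icc (Set.left_mem_Icc.2 hab) (Set.right_mem_Icc.2 hab) ht
  refine le_trans (le_min ?_ ?_) hmin
  · simpa using ha
  · simpa using hb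

theorem tendsto_zero_of_frequently_lt_of_deriv2_le {f f' f'' : ℝ → ℝ} {σ t₀ C ρ : ℝ}
    (hρ : 0 < ρ) (ht₀ : t₀ < σ)
    (hf : ∀ t ∈ Set.Ioo t₀ σ, HasDerivAt f (f' t) t)
    (hf' : ∀ t ∈ Set.Ioo t₀ σ, HasDerivAt f' (f'' t) t)
    (hC : ∀ t ∈ Set.Ioo t₀ σ, f t < ρ → f'' t ≤ C) (h0 : ∀ t, 0 ≤ f t)
    (hfreq : ∀ η > 0, ∃ᶠ t in nhdsWithin σ (Set.Iio σ), f t < η) :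
    Tendsto f (nhdsWithin σ (Set.Iio σ)) (nhds 0) := by
  wlog hC0 : 0 ≤ C generalizing C
  · exact this (C := 0) (fun t ht h => (hC t ht h).trans (not_le.1 hC0).le) le_rfl
  suffices H : ∀ ε > 0, ε < ρ → ∀ᶠ t in nhdsWithin σ (Set.Iio σ), f t < ε by
    refine Metric.tendsto_nhds.2 fun ε hε => ?_
    filter_upwards [H (min ε (ρ / 2)) (by positivity)
      ((min_le_right _ _).trans_lt (by linarith))] with t ht
    rw [Real.dist_eq, sub_zero, abs_of_nonneg (h0 t)]
    exact ht.trans_le (min_le_left _ _)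
  intro ε hε hερ
  by_contra hcon
  have hbig : ∃ᶠ t in nhdsWithin σ (Set.Iio σ), ε ≤ f t := by
    simpa only [not_lt] using Filter.not_eventually.1 hcon
  obtain ⟨δ, hδ, hδC⟩ : ∃ δ > 0, C / 2 * (δ * δ) < ε / 2 := by
    have : Tendsto (fun δ : ℝ => C / 2 * (δ * δ)) (nhdsWithin 0 (Set.Ioi 0)) (nhds 0) := by
      have : Continuous fun δ : ℝ => C / 2 * (δ * δ) := by fun_prop
      simpa using (this.tendsto 0).mono_left nhdsWithin_le_nhds
    obtain ⟨δ, h1, h2⟩ := ((this.eventually_lt_const (half_pos hε)).and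
      self_mem_nhdsWithin).exists
    exact ⟨δ, h2, h1⟩
  obtain ⟨s₁, hs₁, hs₁m⟩ := (hbig.and_eventually
    (Ioo_mem_nhdsLT (max_lt ht₀ (by linarith : σ - δ < σ)))).exists
  obtain ⟨t, ht, htm⟩ := ((hfreq (ε / 2) (half_pos hε)).and_eventually
    (Ioo_mem_nhdsLT hs₁m.2)).exists
  obtain ⟨s₂, hs₂, hs₂m⟩ := (hbig.and_eventually (Ioo_mem_nhdsLT htm.2)).exists
  have hs₁t : t₀ < s₁ := (le_max_left _ _).trans_lt hs₁m.1
  have hs₁δ : σ - δ < s₁ := (le_max_right _ _).trans_lt hs₁m.1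
  have hcont : ContinuousOn f (Set.Icc s₁ s₂) := fun s hs =>
    (hf s ⟨hs₁t.trans_le hs.1, hs.2.trans_lt hs₂m.2⟩).continuousAt.continuousWithinAt
  have hclosed : ∀ c d, s₁ ≤ c → d ≤ s₂ → IsCompact (Set.Icc c d ∩ f ⁻¹' Set.Ici ε) :=
    fun c d hc hd => isCompact_Icc.of_isClosed_subset
      ((hcont.mono (Set.Icc_subset_Icc hc hd)).preimage_isClosed_of_isClosed isClosed_Icc
        isClosed_Ici) Set.inter_subset_left
  obtain ⟨a, ⟨ham, haε⟩, hamax⟩ := (hclosed s₁ t le_rfl hs₂m.1.le).exists_isGreatest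
    ⟨s₁, ⟨le_rfl, htm.1.le⟩, hs₁⟩
  obtain ⟨b, ⟨hbm, hbε⟩, hbmin⟩ := (hclosed t s₂ htm.1.le le_rfl).exists_isLeast
    ⟨s₂, ⟨hs₂m.1.le, le_rfl⟩, hs₂⟩
  have hsmall : ∀ s ∈ Set.Ioo a b, f s < ε := by
    intro s hs
    by_contra! h
    rcases le_total s t with hst | hst
    · exact hs.1.not_ge (hamax ⟨⟨ham.1.trans hs.1.le, hst⟩, h⟩)
    · exact hs.2.not_ge (hbmin ⟨⟨hst, hs.2.le.trans hbm.2⟩, h⟩)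
  have hsub : ∀ s ∈ Set.Icc a b, s ∈ Set.Ioo t₀ σ := fun s hs =>
    ⟨hs₁t.trans_le (ham.1.trans hs.1), (hs.2.trans hbm.2).trans_lt hs₂m.2⟩
  have key := le_add_of_deriv2_le (fun s hs => hf s (hsub s hs)) (fun s hs => hf' s (hsub s hs))
    (fun s hs => hC s (hsub s (Set.Ioo_subset_Icc_self hs)) ((hsmall s hs).trans hερ)) haε hbε
    (t := t) ⟨ham.2, hbm.1⟩
  have hprod : (t - a) * (b - t) ≤ δ * δ :=
    mul_le_mul (by linarith [ham.1, htm.2]) (by linarith [hbm.2, hs₂m.2, htm.1])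
      (by linarith [hbm.1]) hδ.le
  have := mul_le_mul_of_nonneg_left hprod (div_nonneg hC0 zero_le_two)
  linarith

/-- A curve with bounded derivative on a left neighbourhood of `σ` has a limit there. -/
theorem exists_tendsto_of_norm_deriv_le {E : Type*} [NormedAddCommGroup E] [NormedSpace ℝ E]
    [FiniteDimensional ℝ E] {f f' : ℝ → E} {σ c C : ℝ} (hc : c < σ)
    (hf : ∀ t ∈ Set.Ioo c σ, HasDerivAt f (f' t) t) (hC : ∀ t ∈ Set.Ioo c σ, ‖f' t‖ ≤ C) :
    ∃ p, Tendsto f (nhdsWithin σ (Set.Iio σ)) (nhds p) := by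
  have hlip : LipschitzOnWith C.toNNReal f (Set.Ioo c σ) :=
    (convex_Ioo c σ).lipschitzOnWith_of_nnnorm_hasDerivWithin_le
      (fun t ht => (hf t ht).hasDerivWithinAt) fun t ht => by
        rw [← norm_toNNReal]
        exact Real.toNNReal_le_toNNReal (hC t ht)
  obtain ⟨g, hg, hfg⟩ := hlip.extend_finite_dimension
  refine ⟨g σ, ((hg.continuous.tendsto σ).mono_left nhdsWithin_le_nhds).congr' ?_⟩
  filter_upwards [Ioo_mem_nhdsLT hc] with t ht using (hfg ht).symm

theorem hasDerivAt_ite_lt {E : Type*} [NormedAddCommGroup E] [NormedSpace ℝ E]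
    {f f' g : ℝ → E} {σ c : ℝ} {e : E} (hc : c < σ)
    (hf : ∀ t ∈ Set.Ioo c σ, HasDerivAt f (f' t) t)
    (hlim : Tendsto f (nhdsWithin σ (Set.Iio σ)) (nhds (g σ)))
    (hlim' : Tendsto f' (nhdsWithin σ (Set.Iio σ)) (nhds e)) (hg : HasDerivAt g e σ) :
    HasDerivAt (fun t => if t < σ then f t else g t) e σ := by
  set h : ℝ → E := fun t => if t < σ then f t else g t with hh
  have hmem : Set.Ioo c σ ∈ nhdsWithin σ (Set.Iio σ) := Ioo_mem_nhdsLT hc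
  have hd : ∀ t ∈ Set.Ioo c σ, HasDerivAt h (f' t) t := by
    intro t ht
    refine (hf t ht).congr_of_eventuallyEq ?_
    filter_upwards [Iio_mem_nhds ht.2] with s hs
    exact if_pos hs
  have hleft : HasDerivWithinAt h e (Set.Iic σ) σ := by
    refine hasDerivWithinAt_Iic_of_tendsto_deriv (s := Set.Ioo c σ)
      (fun t ht => (hd t ht).differentiableAt.differentiableWithinAt) ?_ hmem ?_
    · have : h σ = g σ := if_neg (lt_irrefl σ)
      rw [ContinuousWithinAt, this]
      refine (hlim.mono_left (nhdsWithin_mono _ Set.Ioo_subset_Iio_self)).congr' ?_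
      filter_upwards [self_mem_nhdsWithin] with t ht
      exact (if_pos ht.2).symm
    · refine hlim'.congr' ?_
      filter_upwards [hmem] with t ht using (hd t ht).deriv.symm
  have hright : HasDerivWithinAt h e (Set.Ici σ) σ :=
    hg.hasDerivWithinAt.congr (fun t ht => if_neg (not_lt.2 ht)) (if_neg (lt_irrefl σ))
  simpa [Set.Iic_union_Ici] using hleft.union hright

theorem isOpen_offDiag : IsOpen {q : Fin N → E3 | OffDiag q} := by
  simp only [OffDiag, Set.ofPred_forall]
  exact isOpen_iInter_of_finite fun i => isOpen_iInter_of_finite fun j =>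
    isOpen_iInter_of_finite fun _ =>
      isOpen_ne_fun (continuous_apply i) (continuous_apply j)

theorem contDiffAt_accel (α : ℝ) (m : Fin N → ℝ) {q : Fin N → E3} (hq : OffDiag q) :
    ContDiffAt ℝ 1 (accel α m) q := by
  refine contDiffAt_pi.2 fun i => ?_
  unfold accel
  refine ContDiffAt.fun_smul contDiffAt_const (ContDiffAt.sum fun j hj => ?_)
  have hne : q i - q j ≠ 0 := sub_ne_zero.2 (hq i j (Finset.ne_of_mem_erase hj).symm)
  have hc : ContDiffAt ℝ 1 (fun y : Fin N → E3 => y i - y j) q := by fun_prop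
  have hr := (hc.norm ℝ hne).rpow_const_of_ne (p := α + 2) (norm_ne_zero_iff.2 hne)
  exact (contDiffAt_const.div hr
    (Real.rpow_pos_of_pos (norm_pos_iff.2 hne) _).ne').fun_smul hc

/-- A solution converging to a collision-free configuration extends past the final time. -/
theorem IsSolnOn.exists_extension {α : ℝ} {m : Fin N → ℝ} {σ : ℝ} (hσ : 0 < σ)
    {x v : ℝ → Fin N → E3} (hsol : IsSolnOn α m x v (Dom σ)) {q : Fin N → E3} (hq : OffDiag q)
    (hlim : Tendsto x (nhdsWithin σ (Set.Iio σ)) (nhds q)) :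
    ∃ (σ' : ℝ) (x' v' : ℝ → Fin N → E3), σ < σ' ∧ IsSolnOn α m x' v' (Dom σ') ∧
      ∀ t ∈ Dom σ, x' t = x t ∧ v' t = v t := by
  have hdom : ∀ t ∈ Set.Ioo 0 σ, t ∈ Dom σ := fun t ht =>
    ⟨ht.1.le, EReal.coe_lt_coe_iff.2 ht.2⟩
  have hxd : ∀ t ∈ Set.Ioo 0 σ, HasDerivAt x (v t) t := fun t ht =>
    hasDerivAt_pi.2 fun i => ((hsol t (hdom t ht)).2 i).1
  have hvd : ∀ t ∈ Set.Ioo 0 σ, HasDerivAt v (accel α m (x t)) t := fun t ht =>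
    hasDerivAt_pi.2 fun i => ((hsol t (hdom t ht)).2 i).2
  have hacc : Tendsto (fun t => accel α m (x t)) (nhdsWithin σ (Set.Iio σ))
      (nhds (accel α m q)) := (contDiffAt_accel α m hq).continuousAt.tendsto.comp hlim
  obtain ⟨p, hp⟩ : ∃ p, Tendsto v (nhdsWithin σ (Set.Iio σ)) (nhds p) := by
    have hev := (hacc.norm.eventually_lt_const (lt_add_one _)).and (Ioo_mem_nhdsLT hσ)
    obtain ⟨c, hc, hcs⟩ := (mem_nhdsLT_iff_exists_Ioo_subset).1 hev
    exact exists_tendsto_of_norm_deriv_le hc (fun t ht => hvd t (hcs ht).2)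
      fun t ht => (hcs ht).1.le
  have hF : ContDiffAt ℝ 1 (fun z : (Fin N → E3) × (Fin N → E3) => (z.2, accel α m z.1))
      (q, p) :=
    contDiffAt_snd.prodMk (ContDiffAt.comp (q, p) (contDiffAt_accel α m hq) contDiffAt_fst)
  obtain ⟨γ, hγ, ε, hε, hγd⟩ :=
    hF.exists_forall_mem_closedBall_exists_eq_forall_mem_Ioo_hasDerivAt₀ σ
  have hγx : ∀ t ∈ Set.Ioo (σ - ε) (σ + ε), HasDerivAt (fun s => (γ s).1) (γ t).2 t :=
    fun t ht => (hγd t ht).fst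
  have hγv : ∀ t ∈ Set.Ioo (σ - ε) (σ + ε),
      HasDerivAt (fun s => (γ s).2) (accel α m (γ t).1) t := fun t ht => (hγd t ht).snd
  have hσm : σ ∈ Set.Ioo (σ - ε) (σ + ε) := ⟨by linarith, by linarith⟩
  have hoff : ∀ᶠ t in nhdsWithin σ (Set.Ici σ), OffDiag (γ t).1 := by
    refine ((hγx σ hσm).continuousAt.eventually (isOpen_offDiag.mem_nhds ?_)).filter_mono
      nhdsWithin_le_nhds
    simpa [hγ] using hq
  obtain ⟨d, hd, hds⟩ := (mem_nhdsGE_iff_exists_Ico_subset).1 hoff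
  have hd : σ < d := hd
  refine ⟨min d (σ + ε), fun t => if t < σ then x t else (γ t).1,
    fun t => if t < σ then v t else (γ t).2, lt_min hd (by linarith), ?_, ?_⟩
  · rintro t ⟨ht0, htσ⟩
    have htσ := EReal.coe_lt_coe_iff.1 htσ
    rcases lt_trichotomy t σ with h | rfl | h
    · have hmem : t ∈ Dom σ := ⟨ht0, EReal.coe_lt_coe_iff.2 h⟩
      have hev := Iio_mem_nhds h
      simp only [if_pos h]
      refine ⟨(hsol t hmem).1, fun i => ⟨((hsol t hmem).2 i).1.congr_of_eventuallyEq ?_,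
        ((hsol t hmem).2 i).2.congr_of_eventuallyEq ?_⟩⟩
      all_goals filter_upwards [hev] with s hs; simp only [if_pos (Set.mem_Iio.1 hs)]
    · have h1 := hasDerivAt_ite_lt hσ hxd (g := fun s => (γ s).1) (e := p)
        (by simpa [hγ] using hlim) hp (by simpa [hγ] using hγx t hσm)
      have h2 := hasDerivAt_ite_lt hσ hvd (g := fun s => (γ s).2) (e := accel α m q)
        (by simpa [hγ] using hp) hacc (by simpa [hγ] using hγv t hσm)
      simp only [if_neg (lt_irrefl t), hγ]
      exact ⟨hq, fun i => ⟨hasDerivAt_pi.1 h1 i, hasDerivAt_pi.1 h2 i⟩⟩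
    · have hmem : t ∈ Set.Ioo (σ - ε) (σ + ε) :=
        ⟨by linarith, htσ.trans_le (min_le_right _ _)⟩
      have hev := Ioi_mem_nhds h
      simp only [if_neg h.not_gt]
      refine ⟨hds ⟨h.le, htσ.trans_le (min_le_left _ _)⟩, fun i =>
        ⟨(hasDerivAt_pi.1 (hγx t hmem) i).congr_of_eventuallyEq ?_,
          (hasDerivAt_pi.1 (hγv t hmem) i).congr_of_eventuallyEq ?_⟩⟩
      all_goals
        filter_upwards [hev] with s hs
        simp only [if_neg (Set.mem_Ioi.1 hs).not_gt]
  · rintro t ⟨_, ht⟩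
    have ht := EReal.coe_lt_coe_iff.1 ht
    exact ⟨if_pos ht, if_pos ht⟩

theorem IsSolnOn.exists_tendsto {α : ℝ} (hα : 2 < α) {m : Fin N → ℝ} (hm : ∀ i, 0 < m i) {σ : ℝ}
    (hσ : 0 < σ) {x v : ℝ → Fin N → E3} (hsol : IsSolnOn α m x v (Dom σ)) :
    ∃ q, Tendsto x (nhdsWithin σ (Set.Iio σ)) (nhds q) := by
  have hα0 : 0 < α := by linarith
  have hdom : ∀ t ∈ Set.Ico 0 σ, t ∈ Dom σ := fun t ht =>
    ⟨ht.1, EReal.coe_lt_coe_iff.2 ht.2⟩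
  have henergy : ∀ t ∈ Set.Ico 0 σ, energy α m (x t) (v t) = energy α m (x 0) (v 0) := by
    intro t ht
    have hd : ∀ s ∈ Set.Icc 0 t, HasDerivAt (fun τ => energy α m (x τ) (v τ)) 0 s := fun s hs =>
      hsol.hasDerivAt_energy hα0 (hdom s ⟨hs.1, hs.2.trans_lt ht.2⟩)
    exact constant_of_has_deriv_right_zero
      (fun s hs => (hd s hs).continuousAt.continuousWithinAt)
      (fun s hs => (hd s (Set.Ico_subset_Icc_self hs)).hasDerivWithinAt) t ⟨ht.1, le_rfl⟩
  have hpot : ∀ t, (2 * α - 4) * pot α m (x t) ≤ 0 := fun t =>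
    mul_nonpos_of_nonneg_of_nonpos (by linarith) (pot_nonpos hm _)
  obtain ⟨M, hM⟩ := exists_le_of_deriv2_le (C := 4 * energy α m (x 0) (v 0)) hσ
    (fun t ht => hsol.hasDerivAt_inertia 0 (hdom t ht))
    (fun t ht => hsol.hasDerivAt_deriv_inertia hα0 0 (hdom t ht)) fun t ht => by
      rw [henergy t ht]
      simpa using hpot t
  have hS : 0 ≤ ∑ i, (m i)⁻¹ := Finset.sum_nonneg fun i _ => (inv_pos.2 (hm i)).le
  have hbdd : ∀ t ∈ Set.Ico 0 σ, x t ∈ Metric.closedBall 0 √((∑ i, (m i)⁻¹) * M) := by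
    intro t ht
    rw [mem_closedBall_zero_iff]
    refine (norm_le_sqrt_inertia hm _).trans (Real.sqrt_le_sqrt ?_)
    exact mul_le_mul_of_nonneg_left (by simpa using hM t ht) hS
  obtain ⟨q, -, hq⟩ := (isCompact_closedBall (0 : Fin N → E3) _).exists_mapClusterPt_of_frequently
    (l := nhdsWithin σ (Set.Iio σ)) (f := x) (Filter.Eventually.frequently (by
      filter_upwards [Ioo_mem_nhdsLT hσ] with t ht using hbdd t (Set.Ioo_subset_Ico_self ht)))
  obtain ⟨δ, hδ, hδB⟩ := Metric.eventually_nhds_iff.1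
    ((continuousAt_sum_mass_mul_inner_accel α m q).tendsto.eventually_const_lt
      (sub_one_lt _))
  have hsqrt : Continuous fun s : ℝ => √((∑ i, (m i)⁻¹) * s) := by fun_prop
  obtain ⟨ρ, hρ, hρδ⟩ := Metric.eventually_nhds_iff.1
    ((hsqrt.tendsto 0).eventually_lt_const (u := δ) (by simpa using hδ))
  have hzero : Tendsto (fun t => inertia m (x t - q)) (nhdsWithin σ (Set.Iio σ)) (nhds 0) := by
    refine tendsto_zero_of_frequently_lt_of_deriv2_le hρ hσ
      (fun t ht => hsol.hasDerivAt_inertia q (hdom t (Set.Ioo_subset_Ico_self ht)))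
      (fun t ht => hsol.hasDerivAt_deriv_inertia hα0 q (hdom t (Set.Ioo_subset_Ico_self ht)))
      (C := 4 * energy α m (x 0) (v 0) - 2 * (∑ i, m i * inner ℝ (q i) (accel α m q i) - 1))
      (fun t ht hlt => ?_) (fun t => inertia_nonneg hm _) fun η hη => ?_
    · have hdist : dist (x t) q < δ := by
        rw [dist_eq_norm]
        refine (norm_le_sqrt_inertia hm _).trans_lt (hρδ ?_)
        rwa [Real.dist_eq, sub_zero, abs_of_nonneg (inertia_nonneg hm _)]
      rw [henergy t (Set.Ioo_subset_Ico_self ht)]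
      linarith [hδB hdist, hpot t]
    · have hη' : ∀ᶠ y in nhds q, inertia m (y - q) < η :=
        ((continuous_inertia_sub m q).tendsto q).eventually_lt_const
          (by simpa [inertia] using hη)
      exact hq.frequently hη'
  refine ⟨q, tendsto_iff_norm_sub_tendsto_zero.2 ?_⟩
  refine squeeze_zero (fun t => norm_nonneg _) (fun t => norm_le_sqrt_inertia hm _) ?_
  simpa [Function.comp_def] using (hsqrt.tendsto 0).comp hzero

/-- **Every singularity is a collision singularity** for `α > 2`: if the maximal time of
existence `σ` is finite, then `x(t)` converges as `t → σ⁻` to a definite point of the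
collision set `Δ`. -/
theorem singularity_is_collision {N : ℕ} (α : ℝ) (hα : 2 < α)
    (m : Fin N → ℝ) (hm : ∀ i, 0 < m i)
    (σ : ℝ) (x v : ℝ → Fin N → E3) (hx : IsMaxSoln α m (σ : EReal) x v) :
    ∃ q : Fin N → E3, (∃ i j, i ≠ j ∧ q i = q j) ∧
      Filter.Tendsto x (nhdsWithin σ (Set.Iio σ)) (nhds q) := by
  obtain ⟨hpos, hsol, hmax⟩ := hx
  have hσ : 0 < σ := EReal.coe_pos.1 hpos
  obtain ⟨q, hq⟩ := hsol.exists_tendsto hα hm hσ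
  refine ⟨q, ?_, hq⟩
  by_contra! hcoll
  obtain ⟨σ', x', v', hlt, hsol', heq⟩ := hsol.exists_extension hσ hcoll hq
  exact (hmax σ' x' v' hsol' heq).not_gt (EReal.coe_lt_coe_iff.2 hlt)

end
end NBodyPaper
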